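/- Fix 1 < γ < 2, σ > 0. There is a constant C > 0 such that for every compactly supported smooth function u on the conical domain Ω = {x ∈ ℝ³ : x1²+x2² ≤ tan²φ0 · x3², |x| ≥ 1, x3 > 0} (with 0 < φ0 < π/2), the weighted interpolation inequality holds: ‖ r^{(2γ+2σ−1)/4} ∇u ‖_{L⁴(Ω)} ≤ C ‖ r^{(2γ−1)/2} ∇²u ‖_{L²(Ω)}^{1/2} · ‖ r^{σ} u ‖_{L^∞(Ω)}^{1/2}, where r = |x|. -/

import Mathlib

open MeasureTheory
/-- The radius r(x) = √(x₁² + x₂² + x₃²). -/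
noncomputable def rr (x : Fin 3 → ℝ) : ℝ :=
  Real.sqrt (x 0 ^ 2 + x 1 ^ 2 + x 2 ^ 2)

/-- The conical domain Ω = {x : x₁²+x₂² ≤ tan²φ₀·x₃², |x| ≥ 1, x₃ > 0}. -/
def cone (φ0 : ℝ) : Set (Fin 3 → ℝ) :=
  {x | x 0 ^ 2 + x 1 ^ 2 ≤ Real.tan φ0 ^ 2 * x 2 ^ 2 ∧ 1 ≤ rr x ∧ 0 < x 2}


abbrev V3 := Fin 3 → ℝ

lemma transl_le (S : Set V3) (e : V3)
    (hSe : ∀ x ∈ S, ∀ t : ℝ, 0 ≤ t → x + t • e ∈ S)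
    (F D : V3 → ℝ) (hF : ContDiff ℝ 1 F) (hc : HasCompactSupport F)
    (hD : ∀ x, HasDerivAt (fun t : ℝ => F (x + t • e)) (D x) 0)
    (hpos : ∀ᵐ x ∂(volume.restrict S), 0 ≤ F x) :
    ∫ x in S, D x ≤ 0 := by
  have hD' : ∀ x t, HasDerivAt (fun t : ℝ => F (x + t • e)) (fderiv ℝ F (x + t • e) e) t := by
    intro x t
    have h1 : HasFDerivAt F (fderiv ℝ F (x + t • e)) (x + t • e) :=
      (hF.differentiable (by norm_num) _).hasFDerivAt
    have h2 : HasDerivAt (fun t : ℝ => x + t • e) e t := by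
      simpa using ((hasDerivAt_id t).smul_const e).const_add x
    exact h1.comp_hasDerivAt t h2
  have hDeq : ∀ x, D x = fderiv ℝ F (x + (0:ℝ) • e) e := fun x => (hD x).unique (hD' x 0)
  have hcontD : Continuous (fun y => fderiv ℝ F y e) :=
    (hF.continuous_fderiv (by norm_num)).clm_apply continuous_const
  have hcD : HasCompactSupport (fun y => fderiv ℝ F y e) := hc.fderiv_apply ℝ e
  obtain ⟨B, hB⟩ := hcD.exists_bound_of_continuous hcontD
  have hB0 : 0 ≤ B := (norm_nonneg _).trans (hB 0)
  let K : Set V3 := (fun p : V3 × ℝ => p.1 - p.2 • e) '' (tsupport F ×ˢ Set.Icc (-1) 1)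
  have hK : IsCompact K := (hc.isCompact.prod isCompact_Icc).image (by fun_prop)
  have hFint : ∀ t : ℝ, Integrable (fun x => F (x + t • e)) volume := fun t =>
    (hF.continuous.integrable_of_hasCompactSupport hc).comp_add_right (t • e)
  have key := hasDerivAt_integral_of_dominated_loc_of_deriv_le (μ := volume.restrict S)
    (F := fun (t : ℝ) x => F (x + t • e)) (F' := fun (t : ℝ) x => fderiv ℝ F (x + t • e) e)
    (x₀ := (0:ℝ)) (s := Metric.ball 0 1) (bound := K.indicator (fun _ => B))
    (Metric.ball_mem_nhds _ one_pos)
    (Filter.Eventually.of_forall fun t => (hFint t).integrableOn.aestronglyMeasurable)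
    (hFint 0).integrableOn
    (by
      apply Continuous.aestronglyMeasurable
      exact hcontD.comp (by fun_prop))
    (Filter.Eventually.of_forall fun x t ht => by
      by_cases hx : x ∈ K
      · simpa [Set.indicator_of_mem hx] using hB _
      · rw [Set.indicator_of_notMem hx]
        have : x + t • e ∉ tsupport F := by
          intro h
          apply hx
          refine ⟨(x + t • e, t), ⟨h, ?_⟩, by simp⟩
          rw [Metric.mem_ball, dist_zero_right, Real.norm_eq_abs] at ht
          exact ⟨(abs_lt.1 ht).1.le, (abs_lt.1 ht).2.le⟩
        have h2 : fderiv ℝ F (x + t • e) = 0 := by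
          by_contra h3
          exact this (support_fderiv_subset ℝ h3)
        simp [h2])
    (((integrable_indicator_iff hK.measurableSet).2
      (integrableOn_const hK.measure_lt_top.ne)).integrableOn)
    (Filter.Eventually.of_forall fun x t _ => hD' x t)
  have hder := key.2
  have hmono : ∀ t : ℝ, 0 ≤ t → ∫ x in S, F (x + t • e) ≤ ∫ x in S, F (x + (0:ℝ) • e) := by
    intro t ht
    have h1 : ∫ x in S, F (x + t • e) = ∫ x in (fun x => x + t • e) '' S, F x := by
      have hmp := measurePreserving_add_right (volume : Measure V3) (t • e)
      exact (hmp.setIntegral_image_emb (measurableEmbedding_addRight _) F S).symm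
    rw [h1]
    simp only [zero_smul, add_zero]
    apply setIntegral_mono_set
    · exact (hF.continuous.integrable_of_hasCompactSupport hc).integrableOn
    · exact hpos
    · apply LE.le.eventuallyLE
      rintro _ ⟨x, hx, rfl⟩
      exact hSe x hx t ht
  have hd2 : HasDerivWithinAt (fun t : ℝ => ∫ x in S, F (x + t • e))
    (∫ x in S, D x) (Set.Ioi 0) 0 := by
    simp only [hDeq]
    exact hder.hasDerivWithinAt
  have := (hasDerivWithinAt_iff_tendsto_slope' (by simp)).1 hd2
  refine le_of_tendsto this ?_
  filter_upwards [self_mem_nhdsWithin] with t ht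
  have ht' : (0:ℝ) < t := ht
  rw [slope_def_field]
  apply div_nonpos_of_nonpos_of_nonneg
  · linarith [hmono t ht'.le]
  · linarith

lemma pt_main (P R Z s u v d M a b : ℝ) (hP : 0 < P) (hR : 0 < R) (hZ : 0 < Z)
    (hs : 0 ≤ s) (hs2 : s ≤ 2 * R) (hu : |u| * Z ≤ M) (ha : 0 ≤ a) (hb : 0 ≤ b) :
    P^2*R^2*Z^2*v^4 ≤ ((a*(2*s)*(P^2*Z^2))*(u*v^3) + P^2*R^2*Z^2*(v*v^3+u*(3*v^2*d)))
      + M*((b*(2*s)*(P^2*Z)) * |v|^3 + P^2*R^2*Z*(3 * |v| * v*d))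
      + 1/2*(P^2*R^2*Z^2*v^4) + (16*a^2+36)*M^2*(P^2*v^2+P^2*R^2*d^2) := by
  have hM : 0 ≤ M := le_trans (by positivity) hu
  have h1 : |(a*(2*s)*(P^2*Z^2))*(u*v^3)| ≤ 4*a*P^2*R*Z*M * |v|^3 := by
    have : |(a*(2*s)*(P^2*Z^2))*(u*v^3)| = 2*a*s*P^2*Z*(|u| * Z) * |v|^3 := by
      rw [abs_mul, abs_mul u, abs_pow, abs_of_nonneg (by positivity : 0 ≤ a*(2*s)*(P^2*Z^2))]; ring
    rw [this]
    calc 2*a*s*P^2*Z*(|u| * Z) * |v|^3 ≤ 2*a*(2*R)*P^2*Z*M * |v|^3 := by gcongr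
      _ = _ := by ring
  have h2 : |P^2*R^2*Z^2*(u*(3*v^2*d))| ≤ 3*P^2*R^2*Z*M*v^2 * |d| := by
    have : |P^2*R^2*Z^2*(u*(3*v^2*d))| = 3*P^2*R^2*Z*(|u| * Z)*v^2 * |d| := by
      rw [abs_mul, abs_mul u, abs_mul (3*v^2), abs_of_nonneg (by positivity : 0 ≤ P^2*R^2*Z^2),
        abs_of_nonneg (by positivity : 0 ≤ 3*v^2)]; ring
    rw [this]
    gcongr
  have h3 : |M*(P^2*R^2*Z*(3 * |v| * v*d))| = 3*P^2*R^2*Z*M*v^2 * |d| := by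
    simp only [abs_mul, abs_abs, abs_of_nonneg hM, abs_of_pos hZ, abs_of_pos hP, abs_of_pos hR, abs_pow]
    rw [abs_of_pos (by norm_num : (0:ℝ) < 3), ← sq_abs v]; ring
  have h4 : 0 ≤ M*((b*(2*s)*(P^2*Z)) * |v|^3) := by positivity
  have h5 : 4*a*P^2*R*Z*M * |v|^3 ≤ 1/4*(P^2*R^2*Z^2*v^4) + 16*a^2*M^2*(P^2*v^2) := by
    have : v^4 = |v|^4 := by rw [← abs_pow, abs_of_nonneg (by positivity)]
    rw [this, ← sq_abs v]
    nlinarith [sq_nonneg (1/2*(P*R*Z * |v|^2) - 4*a*M*P * |v|)]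
  have h6 : 6*P^2*R^2*Z*M*v^2 * |d| ≤ 1/4*(P^2*R^2*Z^2*v^4) + 36*M^2*(P^2*R^2*d^2) := by
    rw [← sq_abs d]
    nlinarith [sq_nonneg (1/2*(P*R*Z*v^2) - 6*M*P*R * |d|)]
  have h7 : 0 ≤ 36*M^2*(P^2*v^2) := by positivity
  have h8 : 0 ≤ 16*a^2*M^2*(P^2*R^2*d^2) := by positivity
  have e1 := (abs_le.1 h1).1
  have e2 := (abs_le.1 h2).1
  have e3 := (abs_le.1 h3.le).1
  nlinarith

lemma pt_hardy (P R E s v d γ : ℝ) (hP : 0 < P) (hR : 0 < R) (hγ1 : 1 < γ) (hγ2 : γ < 2)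
    (hE : 1 ≤ E) (hs : 0 ≤ s) (hs2 : s ≤ 2 * R) (hs3 : s^2 ≤ E * R^2) :
    (γ-1)*(P^2*v^2) ≤ ((E*P^2 + s*((γ-3/2)*(2*s)*(P^2/R^2)))*v^2 + s*P^2*(2*v*d))
      + (γ-1)/2*(P^2*v^2) + 8/(γ-1)*(P^2*R^2*d^2) := by
  have hc : 0 < γ - 1 := by linarith
  have h1 : γ - 1 ≤ E + (2*γ-3)*(s^2/R^2) := by
    have : s^2/R^2 ≤ E := by rw [div_le_iff₀ (by positivity)]; exact hs3
    have h0 : 0 ≤ s^2/R^2 := by positivity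
    rcases le_total 0 (2*γ-3) with h | h <;> nlinarith
  have h2 : |s*P^2*(2*v*d)| ≤ 4*R*P^2 * |v| * |d| := by
    have : |s*P^2*(2*v*d)| = 2*s*P^2 * |v| * |d| := by
      rw [abs_mul, abs_of_nonneg (by positivity : 0 ≤ s*P^2), abs_mul, abs_mul]; norm_num; ring
    rw [this]
    calc 2*s*P^2 * |v| * |d| ≤ 2*(2*R)*P^2 * |v| * |d| := by gcongr
      _ = _ := by ring
  have h3 : 4*R*P^2 * |v| * |d| ≤ (γ-1)/2*(P^2*v^2) + 8/(γ-1)*(P^2*R^2*d^2) := by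
    rw [← sq_abs v, ← sq_abs d]
    have : (γ-1)/2*(P^2 * |v|^2) + 8/(γ-1)*(P^2*R^2 * |d|^2) - 4*R*P^2 * |v| * |d|
      = P^2*((γ-1) * |v| - 4*R * |d|)^2/(2*(γ-1)) := by field_simp; ring
    have h0 : 0 ≤ P^2*((γ-1) * |v| - 4*R * |d|)^2/(2*(γ-1)) := by positivity
    linarith
  have h4 : (γ-1)*(P^2*v^2) ≤ (E*P^2 + s*((γ-3/2)*(2*s)*(P^2/R^2)))*v^2 := by
    have : (E*P^2 + s*((γ-3/2)*(2*s)*(P^2/R^2)))*v^2 = (E + (2*γ-3)*(s^2/R^2))*(P^2*v^2) := by ring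
    rw [this]; gcongr
  have e2 := (abs_le.1 h2).1
  linarith

/-- `D` is the derivative of `F` in direction `e`. -/
def IsDir (e : V3) (F D : V3 → ℝ) : Prop :=
  ∀ x, HasDerivAt (fun t : ℝ => F (x + t • e)) (D x) 0

lemma IsDir.mul {e : V3} {F G D D' : V3 → ℝ} (h : IsDir e F D) (h' : IsDir e G D') :
    IsDir e (fun x => F x * G x) (fun x => D x * G x + F x * D' x) := by
  intro x
  have := (h x).mul (h' x)
  simp only [zero_smul, add_zero] at this
  exact this

lemma IsDir.add {e : V3} {F G D D' : V3 → ℝ} (h : IsDir e F D) (h' : IsDir e G D') :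
    IsDir e (fun x => F x + G x) (fun x => D x + D' x) := by
  intro x
  have := (h x).add (h' x)
  exact this

lemma IsDir.const_mul {e : V3} {F D : V3 → ℝ} (c : ℝ) (h : IsDir e F D) :
    IsDir e (fun x => c * F x) (fun x => c * D x) := by
  intro x
  simpa using (h x).const_mul c

lemma IsDir.pow {e : V3} {F D : V3 → ℝ} (n : ℕ) (h : IsDir e F D) :
    IsDir e (fun x => F x ^ n) (fun x => n * F x ^ (n-1) * D x) := by
  intro x
  have := (h x).pow n
  simp only [zero_smul, add_zero] at this
  exact this

lemma IsDir.rpow {e : V3} {F D : V3 → ℝ} (p : ℝ) (h : IsDir e F D) (hF : ∀ x, 0 < F x) :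
    IsDir e (fun x => F x ^ p) (fun x => D x * p * F x ^ (p-1)) := by
  intro x
  simpa using (h x).rpow_const (p := p) (Or.inl (hF _).ne')

lemma IsDir.abs_cube {e : V3} {F D : V3 → ℝ} (h : IsDir e F D) :
    IsDir e (fun x => |F x| ^ 3) (fun x => 3 * |F x| * F x * D x) := by
  intro x
  have h1 := hasDerivAt_abs_rpow (F (x + (0:ℝ) • e)) (p := 3) (by norm_num)
  have h2 := h1.comp (0:ℝ) (h x)
  simp only [zero_smul, add_zero] at h2
  have e3 : (fun t : ℝ => |F (x + t • e)| ^ 3) = ((fun y : ℝ => |y| ^ (3:ℝ)) ∘ fun t : ℝ => F (x + t • e)) := by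
    ext t
    simp only [Function.comp]
    norm_cast
  rw [e3]
  have e4 : (3:ℝ) * |F x| * F x * D x = 3 * |F x| ^ ((3:ℝ) - 2) * F x * D x := by norm_num
  show HasDerivAt _ (3 * |F x| * F x * D x) 0
  rw [e4]
  exact h2

lemma contDiff_abs_cube : ContDiff ℝ 1 (fun y : ℝ => |y| ^ 3) := by
  have := contDiff_norm_rpow (E := ℝ) (p := 3) (by norm_num)
  convert this using 2 with y
  rw [Real.norm_eq_abs]
  norm_cast

lemma isDir_fderiv (e : V3) (F : V3 → ℝ) (hF : Differentiable ℝ F) :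
    IsDir e F (fun x => fderiv ℝ F x e) := by
  intro x
  have h1 : HasFDerivAt F (fderiv ℝ F (x + (0:ℝ) • e)) (x + (0:ℝ) • e) := (hF _).hasFDerivAt
  have h2 : HasDerivAt (fun t : ℝ => x + t • e) e 0 := by
    simpa using ((hasDerivAt_id (0:ℝ)).smul_const e).const_add x
  have := h1.comp_hasDerivAt (0:ℝ) h2
  simp only [zero_smul, add_zero] at this
  exact this

/-- The squared smooth weight `1 + |x|²`. -/
def qq (x : V3) : ℝ := 1 + (x 0 ^ 2 + x 1 ^ 2 + x 2 ^ 2)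

/-- Euclidean inner product. -/
def dot (e x : V3) : ℝ := e 0 * x 0 + e 1 * x 1 + e 2 * x 2

lemma qq_pos (x : V3) : 0 < qq x := by unfold qq; positivity

lemma qq_contDiff : ContDiff ℝ 1 qq := by unfold qq; fun_prop

lemma dot_contDiff (e : V3) : ContDiff ℝ 1 (dot e) := by unfold dot; fun_prop

lemma dot_isDir (e : V3) : IsDir e (dot e) (fun _ => dot e e) := by
  intro x
  have : (fun t : ℝ => dot e (x + t • e)) = fun t => dot e x + t * dot e e := by
    ext t; simp [dot]; ring
  rw [this]
  simpa using ((hasDerivAt_id (0:ℝ)).mul_const (dot e e)).const_add (dot e x)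

lemma qq_isDir (e : V3) : IsDir e qq (fun x => 2 * dot e x) := by
  intro x
  have : (fun t : ℝ => qq (x + t • e)) = fun t => qq x + (t * (2 * dot e x) + t ^ 2 * dot e e) := by
    ext t; simp [dot, qq]; ring
  rw [this]
  have := (((hasDerivAt_id (0:ℝ)).mul_const (2 * dot e x)).add
    (((hasDerivAt_id (0:ℝ)).pow 2).mul_const (dot e e))).const_add (qq x)
  simpa using this

lemma dot_sq_le (e x : V3) : dot e x ^ 2 ≤ dot e e * qq x := by
  unfold dot qq
  nlinarith [sq_nonneg (e 0 * x 1 - e 1 * x 0), sq_nonneg (e 0 * x 2 - e 2 * x 0),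
    sq_nonneg (e 1 * x 2 - e 2 * x 1), sq_nonneg (e 0), sq_nonneg (e 1), sq_nonneg (e 2)]

lemma qq_rpow_contDiff (p : ℝ) : ContDiff ℝ 1 (fun x => qq x ^ p) :=
  qq_contDiff.rpow_const_of_ne (fun x => (qq_pos x).ne')

lemma int3 (μ : Measure V3) (A B C : V3 → ℝ) (b c : ℝ) (hA : Integrable A μ)
    (hB : Integrable B μ) (hC : Integrable C μ) :
    ∫ x, (A x + b * B x) + c * C x ∂μ = ∫ x, A x ∂μ + b * ∫ x, B x ∂μ + c * ∫ x, C x ∂μ := by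
  have h1 : Integrable (fun x => A x + b * B x) μ := hA.add (hB.const_mul b)
  rw [integral_add h1 (hC.const_mul c), integral_add hA (hB.const_mul b), integral_const_mul,
    integral_const_mul]

lemma dir_est (S : Set V3) (hS : MeasurableSet S) (e : V3)
    (hSe : ∀ x ∈ S, ∀ t : ℝ, 0 ≤ t → x + t • e ∈ S)
    (hSd : ∀ x ∈ S, 0 ≤ dot e x) (hE1 : 1 ≤ dot e e) (hE2 : dot e e ≤ 4)
    (γ σ : ℝ) (hγ1 : 1 < γ) (hγ2 : γ < 2) (hσ : 0 < σ)
    (u : V3 → ℝ) (hu : ContDiff ℝ (⊤ : ℕ∞) u) (huc : HasCompactSupport u) (M : ℝ)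
    (hM : ∀ᵐ x ∂(volume.restrict S), |u x| * qq x ^ (σ/2) ≤ M) :
    ∫ x in S, qq x ^ (γ - 1/2 + σ) * (fderiv ℝ u x e)^4 ≤
      (2 * (16 * (γ - 1/2 + σ)^2 + 36) * (16/(γ-1)^2 + 1)) * M^2 *
      ∫ x in S, qq x ^ (γ - 1/2) * (fderiv ℝ (fun y => fderiv ℝ u y e) x e)^2 := by
  set v : V3 → ℝ := fun y => fderiv ℝ u y e with hv
  set d : V3 → ℝ := fun x => fderiv ℝ v x e with hd
  have huS : ContDiff ℝ 1 u := hu.of_le (by exact_mod_cast le_top)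
  have hvS : ContDiff ℝ 1 v := by
    have : ContDiff ℝ 1 (fderiv ℝ u) := hu.fderiv_right (by
      rw [one_add_one_eq_two]; exact WithTop.coe_le_coe.2 (le_top : ((2:ℕ∞)) ≤ ⊤))
    exact this.clm_apply contDiff_const
  have hvc : HasCompactSupport v := huc.fderiv_apply ℝ e
  have hdc : HasCompactSupport d := hvc.fderiv_apply ℝ e
  have hdS : Continuous d := (hvS.continuous_fderiv (by norm_num)).clm_apply continuous_const
  have huD : IsDir e u v := isDir_fderiv e u (huS.differentiable (by norm_num))
  have hvD : IsDir e v d := isDir_fderiv e v (hvS.differentiable (by norm_num))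
  have hqc : ∀ p : ℝ, Continuous (fun x => qq x ^ p) := fun p => (qq_rpow_contDiff p).continuous
  have hqD : ∀ p : ℝ, IsDir e (fun x => qq x ^ p) (fun x => (2 * dot e x) * p * qq x ^ (p-1)) :=
    fun p => (qq_isDir e).rpow p qq_pos
  have hvcont := hvS.continuous
  have hucont := huS.continuous
  have hdot := (dot_contDiff e).continuous
  -- integrability tools
  have intv : ∀ f : V3 → ℝ, Continuous f → (∀ x, v x = 0 → d x = 0 → f x = 0) →
      Integrable f (volume.restrict S) := by
    intro f hf h0
    have hcs : HasCompactSupport f := by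
      have hvd : IsCompact (tsupport v ∪ tsupport d) := hvc.isCompact.union hdc.isCompact
      refine HasCompactSupport.intro hvd (fun x hx => ?_)
      rw [Set.mem_union, not_or] at hx
      exact h0 x (image_eq_zero_of_notMem_tsupport hx.1) (image_eq_zero_of_notMem_tsupport hx.2)
    exact (hf.integrable_of_hasCompactSupport hcs).integrableOn
  have hXi : Integrable (fun x => qq x ^ (γ - 1/2 + σ) * v x ^ 4) (volume.restrict S) :=
    intv _ ((hqc _).mul (hvcont.pow 4)) (by intro x h1 h2; simp [h1])
  have hNi : Integrable (fun x => qq x ^ (γ - 1/2) * d x ^ 2) (volume.restrict S) :=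
    intv _ ((hqc _).mul (hdS.pow 2)) (by intro x h1 h2; simp [h2])
  have hHi : Integrable (fun x => qq x ^ (γ - 3/2) * v x ^ 2) (volume.restrict S) :=
    intv _ ((hqc _).mul (hvcont.pow 2)) (by intro x h1 h2; simp [h1])
  -- rpow algebra
  have hP2 : ∀ x, qq x ^ (γ - 3/2) = (qq x ^ ((γ-3/2)/2))^2 := by
    intro x; rw [← Real.rpow_natCast, ← Real.rpow_mul (qq_pos x).le]; congr 1; push_cast; ring
  have hR2 : ∀ x, (qq x ^ (1/2:ℝ))^2 = qq x := by
    intro x; rw [← Real.rpow_natCast, ← Real.rpow_mul (qq_pos x).le]; norm_num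
  have hZ2 : ∀ x, qq x ^ σ = (qq x ^ (σ/2))^2 := by
    intro x; rw [← Real.rpow_natCast, ← Real.rpow_mul (qq_pos x).le]; congr 1; push_cast; ring
  have hs2 : ∀ x, dot e x ≤ 2 * qq x ^ (1/2:ℝ) := by
    intro x
    have h1 := dot_sq_le e x
    have h2 : (0:ℝ) < qq x ^ (1/2:ℝ) := Real.rpow_pos_of_pos (qq_pos x) _
    apply le_of_abs_le; apply abs_le_of_sq_le_sq _ (by positivity)
    rw [mul_pow, hR2]
    nlinarith [qq_pos x]
  have w1 : ∀ x, qq x ^ (γ - 1/2) = (qq x ^ ((γ-3/2)/2))^2 * (qq x ^ (1/2:ℝ))^2 := by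
    intro x; rw [← hP2, hR2, ← Real.rpow_add_one (qq_pos x).ne']; congr 1; ring
  have w2 : ∀ x, qq x ^ (γ - 1/2 + σ) =
      (qq x ^ ((γ-3/2)/2))^2 * (qq x ^ (1/2:ℝ))^2 * (qq x ^ (σ/2))^2 := by
    intro x; rw [← w1, ← hZ2, ← Real.rpow_add (qq_pos x)]
  have w3 : ∀ x, qq x ^ (γ - 1/2 + σ - 1) =
      (qq x ^ ((γ-3/2)/2))^2 * (qq x ^ (σ/2))^2 := by
    intro x; rw [← hP2, ← hZ2, ← Real.rpow_add (qq_pos x)]; congr 1; ring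
  have w4 : ∀ x, qq x ^ (γ - 1/2 + σ/2) =
      (qq x ^ ((γ-3/2)/2))^2 * (qq x ^ (1/2:ℝ))^2 * (qq x ^ (σ/2)) := by
    intro x; rw [← w1, ← Real.rpow_add (qq_pos x)]
  have w5 : ∀ x, qq x ^ (γ - 1/2 + σ/2 - 1) =
      (qq x ^ ((γ-3/2)/2))^2 * (qq x ^ (σ/2)) := by
    intro x; rw [← hP2, ← Real.rpow_add (qq_pos x)]; congr 1; ring
  have w6 : ∀ x, qq x ^ (γ - 3/2 - 1) =
      (qq x ^ ((γ-3/2)/2))^2 / (qq x ^ (1/2:ℝ))^2 := by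
    intro x; rw [← hP2, hR2, Real.rpow_sub_one (qq_pos x).ne']
  have hrp : ∀ x (p : ℝ), 0 < qq x ^ p := fun x p => Real.rpow_pos_of_pos (qq_pos x) p
  -- Hardy
  have hardy : ∫ x in S, qq x ^ (γ - 3/2) * v x ^ 2 ≤
      16/(γ-1)^2 * ∫ x in S, qq x ^ (γ - 1/2) * d x ^ 2 := by
    have hFD := ((dot_isDir e).mul (hqD (γ - 3/2))).mul (hvD.pow 2)
    have hle := transl_le S e hSe _ _
      (((dot_contDiff e).mul (qq_rpow_contDiff (γ-3/2))).mul (hvS.pow 2))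
      (HasCompactSupport.intro hvc.isCompact (fun x hx => by
        simp [image_eq_zero_of_notMem_tsupport hx])) hFD
      (by
        filter_upwards [ae_restrict_mem hS] with x hx
        have := hSd x hx
        have := hrp x (γ-3/2)
        positivity)
    have hDi := intv (fun x => (dot e e * qq x ^ (γ - 3/2) +
        dot e x * ((2 * dot e x) * (γ - 3/2) * qq x ^ (γ - 3/2 - 1))) * v x ^ 2 +
        dot e x * qq x ^ (γ - 3/2) * (((2:ℕ):ℝ) * v x ^ (2-1) * d x)) (by
          have := hqc (γ-3/2); have := hqc (γ-3/2-1); fun_prop) (by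
          intro x h1 h2; simp [h1])
    have hmono : ∫ x in S, (γ-1) * (qq x ^ (γ - 3/2) * v x ^ 2) ≤
      ∫ x in S, (((dot e e * qq x ^ (γ - 3/2) +
        dot e x * ((2 * dot e x) * (γ - 3/2) * qq x ^ (γ - 3/2 - 1))) * v x ^ 2 +
        dot e x * qq x ^ (γ - 3/2) * (((2:ℕ):ℝ) * v x ^ (2-1) * d x))
        + (γ-1)/2 * (qq x ^ (γ - 3/2) * v x ^ 2)) + 8/(γ-1) * (qq x ^ (γ - 1/2) * d x ^ 2) := by
      apply integral_mono_ae (hHi.const_mul _)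
        ((hDi.add (hHi.const_mul _)).add (hNi.const_mul _))
      filter_upwards [ae_restrict_mem hS] with x hx
      have := pt_hardy _ _ (dot e e) (dot e x) (v x) (d x) γ (hrp x ((γ-3/2)/2)) (hrp x (1/2))
        hγ1 hγ2 hE1 (hSd x hx) (hs2 x) (by rw [hR2]; exact dot_sq_le e x)
      simp only [Pi.add_apply]
      rw [w6, w1, hP2]
      refine this.trans (le_of_eq ?_)
      push_cast
      ring
    rw [int3 _ _ _ _ _ _ hDi hHi hNi, integral_const_mul] at hmono
    have hc : 0 < γ - 1 := by linarith
    have h3 : (γ-1)/2 * ∫ x in S, qq x ^ (γ - 3/2) * v x ^ 2 ≤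
      8/(γ-1) * ∫ x in S, qq x ^ (γ - 1/2) * d x ^ 2 := by linarith
    have h4 := mul_le_mul_of_nonneg_left h3 (by positivity : 0 ≤ 2/(γ-1))
    calc _ = 2/(γ-1) * ((γ-1)/2 * ∫ x in S, qq x ^ (γ - 3/2) * v x ^ 2) := by
            rw [← mul_assoc]; field_simp
      _ ≤ _ := h4
      _ = _ := by rw [← mul_assoc]; congr 1; field_simp; norm_num
  -- main
  have hFD := ((hqD (γ - 1/2 + σ)).mul (huD.mul (hvD.pow 3))).add
    (((hqD (γ - 1/2 + σ/2)).mul hvD.abs_cube).const_mul M)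
  have hle := transl_le S e hSe _ _
      (((qq_rpow_contDiff _).mul (huS.mul (hvS.pow 3))).add
        (contDiff_const.mul ((qq_rpow_contDiff _).mul (contDiff_abs_cube.comp hvS))))
      (HasCompactSupport.intro hvc.isCompact (fun x hx => by
        simp [image_eq_zero_of_notMem_tsupport hx])) hFD
      (by
        filter_upwards [hM] with x hx
        have e1 : |qq x ^ (γ - 1/2 + σ) * (u x * v x ^ 3)| =
            (qq x ^ (γ - 1/2 + σ/2) * |v x|^3) * (|u x| * qq x ^ (σ/2)) := by
          rw [abs_mul, abs_mul, abs_pow, abs_of_pos (hrp x _), w2, w4]; ring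
        have e2 : (qq x ^ (γ - 1/2 + σ/2) * |v x|^3) * (|u x| * qq x ^ (σ/2)) ≤
          (qq x ^ (γ - 1/2 + σ/2) * |v x|^3) * M := by
          have := hrp x (γ - 1/2 + σ/2)
          gcongr
        have e3 := (abs_le.1 e1.le).1
        simp only [Function.comp]
        linarith)
  have hDi := intv (fun x => ((2 * dot e x) * (γ - 1/2 + σ) * qq x ^ (γ - 1/2 + σ - 1) *
      (u x * v x ^ 3) + qq x ^ (γ - 1/2 + σ) *
        (v x * v x ^ 3 + u x * (((3:ℕ):ℝ) * v x ^ (3-1) * d x))) +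
      M * ((2 * dot e x) * (γ - 1/2 + σ/2) * qq x ^ (γ - 1/2 + σ/2 - 1) * |v x| ^ 3 +
        qq x ^ (γ - 1/2 + σ/2) * (3 * |v x| * v x * d x))) (by
        have := hqc (γ - 1/2 + σ); have := hqc (γ - 1/2 + σ - 1)
        have := hqc (γ - 1/2 + σ/2); have := hqc (γ - 1/2 + σ/2 - 1)
        have := hvcont.abs
        fun_prop) (by
          intro x h1 h2; simp [h1])
  have hmono : ∫ x in S, qq x ^ (γ - 1/2 + σ) * v x ^ 4 ≤
    ∫ x in S, ((((2 * dot e x) * (γ - 1/2 + σ) * qq x ^ (γ - 1/2 + σ - 1) *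
      (u x * v x ^ 3) + qq x ^ (γ - 1/2 + σ) *
        (v x * v x ^ 3 + u x * (((3:ℕ):ℝ) * v x ^ (3-1) * d x))) +
      M * ((2 * dot e x) * (γ - 1/2 + σ/2) * qq x ^ (γ - 1/2 + σ/2 - 1) * |v x| ^ 3 +
        qq x ^ (γ - 1/2 + σ/2) * (3 * |v x| * v x * d x)))
        + 1/2 * (qq x ^ (γ - 1/2 + σ) * v x ^ 4)) +
        (16 * (γ - 1/2 + σ)^2 + 36) * M^2 * (qq x ^ (γ - 3/2) * v x ^ 2 +
          qq x ^ (γ - 1/2) * d x ^ 2) := by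
    apply integral_mono_ae hXi
      ((hDi.add (hXi.const_mul _)).add ((hHi.add hNi).const_mul _))
    filter_upwards [ae_restrict_mem hS, hM] with x hx hMx
    have := pt_main _ _ _ (dot e x) (u x) (v x) (d x) M (γ - 1/2 + σ) (γ - 1/2 + σ/2)
      (hrp x ((γ-3/2)/2)) (hrp x (1/2)) (hrp x (σ/2))
      (hSd x hx) (hs2 x) hMx (by linarith) (by linarith)
    simp only [Pi.add_apply]
    rw [w3, w5, w2, w4, w1, hP2]
    refine this.trans (le_of_eq ?_)
    push_cast
    ring
  have hHN : Integrable (fun x => qq x ^ (γ - 3/2) * v x ^ 2 + qq x ^ (γ - 1/2) * d x ^ 2)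
    (volume.restrict S) := hHi.add hNi
  rw [int3 _ _ _ _ _ _ hDi hXi hHN, integral_add hHi hNi] at hmono
  have hK : 0 ≤ (16 * (γ - 1/2 + σ)^2 + 36) * M^2 := by positivity
  have h5 := mul_le_mul_of_nonneg_left hardy hK
  linarith

lemma rr_sq (x : V3) : rr x ^ 2 = x 0 ^ 2 + x 1 ^ 2 + x 2 ^ 2 := by
  unfold rr; exact Real.sq_sqrt (by positivity)

lemma rr_nonneg (x : V3) : 0 ≤ rr x := Real.sqrt_nonneg _

lemma rr_cont : Continuous rr := by
  unfold rr; fun_prop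

lemma cone_meas (φ0 : ℝ) : MeasurableSet (cone φ0) := by
  have h1 : MeasurableSet {x : V3 | x 0 ^ 2 + x 1 ^ 2 ≤ Real.tan φ0 ^ 2 * x 2 ^ 2} :=
    (isClosed_le (by fun_prop) (by fun_prop)).measurableSet
  have h2 : MeasurableSet {x : V3 | 1 ≤ rr x} :=
    (isClosed_le continuous_const rr_cont).measurableSet
  have h3 : MeasurableSet {x : V3 | 0 < x 2} :=
    (isOpen_lt continuous_const (by fun_prop)).measurableSet
  exact h1.inter (h2.inter h3)

lemma cone_dot (φ0 a b : ℝ) (h2 : (a^2+b^2) * Real.tan φ0 ^ 2 ≤ 1)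
    (x : V3) (hx : x ∈ cone φ0) : 0 ≤ dot ![a, b, 1] x := by
  obtain ⟨hx1, hx2, hx3⟩ := hx
  have h3 : (a * x 0 + b * x 1)^2 ≤ (x 2)^2 := by
    calc (a * x 0 + b * x 1)^2 ≤ (a^2+b^2) * (x 0 ^2 + x 1 ^ 2) := by
          nlinarith [sq_nonneg (a * x 1 - b * x 0)]
      _ ≤ (a^2+b^2) * (Real.tan φ0 ^ 2 * x 2 ^ 2) := by gcongr
      _ = ((a^2+b^2) * Real.tan φ0 ^ 2) * x 2 ^ 2 := by ring
      _ ≤ 1 * x 2 ^ 2 := by gcongr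
      _ = _ := one_mul _
  have h4 := abs_le_of_sq_le_sq' h3 hx3.le
  simp [dot]
  linarith [h4.1]

lemma cone_add (φ0 a b : ℝ) (h1 : a^2+b^2 ≤ Real.tan φ0 ^ 2)
    (h2 : (a^2+b^2) * Real.tan φ0 ^ 2 ≤ 1)
    (x : V3) (hx : x ∈ cone φ0) (t : ℝ) (ht : 0 ≤ t) : x + t • ![a, b, 1] ∈ cone φ0 := by
  have hd := cone_dot φ0 a b h2 x hx
  obtain ⟨hx1, hx2, hx3⟩ := hx
  simp [dot] at hd
  have h3 : (a * x 0 + b * x 1)^2 ≤ (Real.tan φ0 ^ 2 * x 2)^2 := by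
    calc (a * x 0 + b * x 1)^2 ≤ (a^2+b^2) * (x 0 ^2 + x 1 ^ 2) := by
          nlinarith [sq_nonneg (a * x 1 - b * x 0)]
      _ ≤ Real.tan φ0 ^ 2 * (Real.tan φ0 ^ 2 * x 2 ^ 2) := by gcongr
      _ = _ := by ring
  have h4 := (abs_le_of_sq_le_sq' h3 (by positivity)).2
  refine ⟨?_, ?_, ?_⟩
  · simp
    nlinarith [mul_le_mul_of_nonneg_left h4 ht, mul_le_mul_of_nonneg_left h1 (sq_nonneg t)]
  · refine hx2.trans (Real.sqrt_le_sqrt ?_)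
    simp
    nlinarith [mul_nonneg ht hd, sq_nonneg (t*a), sq_nonneg (t*b), sq_nonneg t]
  · simp
    linarith

lemma fderiv_bound (δ : ℝ) (hδ : 0 < δ) (L : V3 →L[ℝ] ℝ) :
    ‖L‖ ≤ (1 + 2/δ) * (|L ![δ,0,1]| + |L ![0,δ,1]| + |L ![0,0,1]|) := by
  apply L.opNorm_le_bound (by positivity)
  intro w
  have hw : w = (w 0/δ) • ![δ,0,1] + (w 1/δ) • ![0,δ,1] + (w 2 - w 0/δ - w 1/δ) • (![0,0,1] : V3) := by
    ext i
    fin_cases i <;> simp <;> field_simp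
  have b0 : |w 0| ≤ ‖w‖ := norm_le_pi_norm w 0
  have b1 : |w 1| ≤ ‖w‖ := norm_le_pi_norm w 1
  have b2 : |w 2| ≤ ‖w‖ := norm_le_pi_norm w 2
  have c0 : |w 0/δ| ≤ ‖w‖/δ := by rw [abs_div, abs_of_pos hδ]; gcongr
  have c1 : |w 1/δ| ≤ ‖w‖/δ := by rw [abs_div, abs_of_pos hδ]; gcongr
  have hnd : 0 ≤ ‖w‖/δ := by positivity
  have hk : (1 + 2/δ) * ‖w‖ = ‖w‖ + 2 * (‖w‖/δ) := by ring
  have d0 : |w 0/δ| ≤ (1 + 2/δ) * ‖w‖ := by rw [hk]; linarith [norm_nonneg w]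
  have d1 : |w 1/δ| ≤ (1 + 2/δ) * ‖w‖ := by rw [hk]; linarith [norm_nonneg w]
  have d2 : |w 2 - w 0/δ - w 1/δ| ≤ (1 + 2/δ) * ‖w‖ := by
    rw [hk]
    have := abs_sub (w 2 - w 0/δ) (w 1/δ)
    have := abs_sub (w 2) (w 0/δ)
    linarith
  have e1 : L w = (w 0/δ) * L ![δ,0,1] + (w 1/δ) * L ![0,δ,1] +
      (w 2 - w 0/δ - w 1/δ) * L ![0,0,1] := by
    conv_lhs => rw [hw]
    simp only [map_add, map_smul, smul_eq_mul]
  rw [e1, Real.norm_eq_abs]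
  calc _ ≤ |(w 0/δ) * L ![δ,0,1]| + |(w 1/δ) * L ![0,δ,1]| +
      |(w 2 - w 0/δ - w 1/δ) * L ![0,0,1]| := abs_add_three _ _ _
    _ ≤ ((1 + 2/δ) * ‖w‖) * |L ![δ,0,1]| + ((1 + 2/δ) * ‖w‖) * |L ![0,δ,1]| +
      ((1 + 2/δ) * ‖w‖) * |L ![0,0,1]| := by
        rw [abs_mul, abs_mul, abs_mul]; gcongr
    _ = _ := by ring

lemma second_bound (u : V3 → ℝ) (hu : ContDiff ℝ (⊤ : ℕ∞) u) (e x : V3) (he : ‖e‖ ≤ 1) :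
    |fderiv ℝ (fun y => fderiv ℝ u y e) x e| ≤ ‖iteratedFDeriv ℝ 2 u x‖ := by
  have hd : DifferentiableAt ℝ (fderiv ℝ u) x := by
    have : ContDiff ℝ 1 (fderiv ℝ u) := hu.fderiv_right (by
      rw [one_add_one_eq_two]; exact WithTop.coe_le_coe.2 (le_top : ((2:ℕ∞)) ≤ ⊤))
    exact this.differentiable (by norm_num) x
  have h1 : fderiv ℝ (fun y => fderiv ℝ u y e) x e = iteratedFDeriv ℝ 2 u x ![e, e] := by
    rw [iteratedFDeriv_two_apply, fderiv_clm_apply hd (differentiableAt_const e)]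
    simp
  rw [h1, ← Real.norm_eq_abs]
  refine ((iteratedFDeriv ℝ 2 u x).le_opNorm _).trans ?_
  simp only [Fin.prod_univ_two, Matrix.cons_val_zero, Matrix.cons_val_one]
  have : ‖e‖ * ‖e‖ ≤ 1 := by nlinarith [norm_nonneg e]
  exact mul_le_of_le_one_right (norm_nonneg _) this

lemma eLp_four (μ : Measure V3) (f : V3 → ℝ) (hf : MemLp f 4 μ) :
    eLpNorm f 4 μ = ENNReal.ofReal ((∫ x, f x ^ 4 ∂μ) ^ (1/4:ℝ)) := by
  rw [hf.eLpNorm_eq_integral_rpow_norm (by norm_num) (by norm_num)]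
  congr 2
  · apply integral_congr_ae
    filter_upwards with x
    have : (ENNReal.toReal 4) = ((4:ℕ):ℝ) := by norm_num
    rw [this, Real.rpow_natCast, Real.norm_eq_abs, Even.pow_abs (by decide)]
  · norm_num

lemma eLp_two (μ : Measure V3) (f : V3 → ℝ) (hf : MemLp f 2 μ) :
    eLpNorm f 2 μ = ENNReal.ofReal ((∫ x, f x ^ 2 ∂μ) ^ (1/2:ℝ)) := by
  rw [hf.eLpNorm_eq_integral_rpow_norm (by norm_num) (by norm_num)]
  congr 2
  · apply integral_congr_ae
    filter_upwards with x
    have : (ENNReal.toReal 2) = ((2:ℕ):ℝ) := by norm_num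
    rw [this, Real.rpow_natCast, Real.norm_eq_abs, Even.pow_abs (by decide)]
  · norm_num

lemma qq_le (φ0 : ℝ) (x : V3) (hx : x ∈ cone φ0) (p : ℝ) (hp : 0 ≤ p) :
    qq x ^ p ≤ 2 ^ p * rr x ^ (2 * p) := by
  have h1 : qq x ≤ 2 * rr x ^ 2 := by
    have := rr_sq x
    have := hx.2.1
    unfold qq
    nlinarith
  calc qq x ^ p ≤ (2 * rr x ^ 2) ^ p := Real.rpow_le_rpow (qq_pos x).le h1 hp
    _ = _ := by
      rw [Real.mul_rpow (by norm_num) (by positivity), ← Real.rpow_natCast (rr x),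
        ← Real.rpow_mul (rr_nonneg x)]
      norm_num

lemma rr_le (x : V3) (p : ℝ) (hp : 0 ≤ p) : rr x ^ (2 * p) ≤ qq x ^ p := by
  have h1 : rr x ^ 2 ≤ qq x := by rw [rr_sq]; unfold qq; linarith
  calc rr x ^ (2 * p) = (rr x ^ 2) ^ p := by
        rw [← Real.rpow_natCast (rr x), ← Real.rpow_mul (rr_nonneg x)]; norm_num
    _ ≤ _ := Real.rpow_le_rpow (by positivity) h1 hp

lemma sum_four (a b c : ℝ) : (a + b + c)^4 ≤ 27 * (a^4 + b^4 + c^4) := by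
  have h1 : (a+b+c)^2 ≤ 3 * (a^2+b^2+c^2) := by
    nlinarith [sq_nonneg (a-b), sq_nonneg (b-c), sq_nonneg (a-c)]
  have h2 : (a^2+b^2+c^2)^2 ≤ 3 * (a^4+b^4+c^4) := by
    nlinarith [sq_nonneg (a^2-b^2), sq_nonneg (b^2-c^2), sq_nonneg (a^2-c^2)]
  have h3 : ((a+b+c)^2)^2 ≤ (3 * (a^2+b^2+c^2))^2 := by gcongr
  nlinarith

lemma real_est (γ σ φ0 : ℝ)
    (hγ1 : 1 < γ) (hγ2 : γ < 2) (hσ : 0 < σ)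
    (hφ0 : 0 < φ0) (hφ0' : φ0 < Real.pi / 2) :
    ∃ C : ℝ, 0 < C ∧
      ∀ u : V3 → ℝ, ContDiff ℝ (⊤ : ℕ∞) u → HasCompactSupport u → ∀ m : ℝ,
        (∀ᵐ x ∂(volume.restrict (cone φ0)), |rr x ^ σ * u x| ≤ m) →
        ∫ x in cone φ0, (rr x ^ ((2 * γ + 2 * σ - 1) / 4) * ‖fderiv ℝ u x‖) ^ 4 ≤
          C * m ^ 2 * ∫ x in cone φ0, (rr x ^ ((2 * γ - 1) / 2) * ‖iteratedFDeriv ℝ 2 u x‖) ^ 2 := by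
  have hT : 0 < Real.tan φ0 := Real.tan_pos_of_pos_of_lt_pi_div_two hφ0 hφ0'
  set T := Real.tan φ0 with hTdef
  obtain ⟨δ, hδ, hδ1, hδT, hδT2⟩ : ∃ δ : ℝ, 0 < δ ∧ δ ≤ 1 ∧ δ^2 ≤ T^2 ∧ δ^2 * T^2 ≤ 1 := by
    refine ⟨T/(1+T^2), by positivity, ?_, ?_, ?_⟩
    · rw [div_le_one (by positivity)]; nlinarith [sq_nonneg (T-1)]
    · have : T/(1+T^2) ≤ T := div_le_self hT.le (by nlinarith)
      gcongr
    · rw [← mul_pow]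
      have : T/(1+T^2)*T ≤ 1 := by
        rw [div_mul_eq_mul_div, div_le_one (by positivity)]; nlinarith
      exact pow_le_one₀ (by positivity) this
  set K := (2 * (16 * (γ - 1/2 + σ)^2 + 36) * (16/(γ-1)^2 + 1)) with hK
  have hKpos : 0 < K := by
    have : 0 < γ - 1 := by linarith
    positivity
  refine ⟨((1 + 2/δ)^4 * 27) * (3 * (K * (2^(σ/2:ℝ))^2 * 2^(γ-1/2))), by positivity, ?_⟩
  intro u hu huc m hm
  set S := cone φ0
  have hS : MeasurableSet S := cone_meas φ0
  have hM : ∀ᵐ x ∂(volume.restrict S), |u x| * qq x ^ (σ/2) ≤ 2^(σ/2:ℝ) * m := by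
    filter_upwards [hm, ae_restrict_mem hS] with x hx hxS
    have h1 := qq_le φ0 x hxS (σ/2) (by linarith)
    have h2 : 2 * (σ/2) = σ := by ring
    rw [h2] at h1
    rw [abs_mul, abs_of_nonneg (Real.rpow_nonneg (rr_nonneg x) _)] at hx
    calc |u x| * qq x ^ (σ/2) ≤ |u x| * (2 ^ (σ/2) * rr x ^ σ) := by gcongr
      _ = 2 ^ (σ/2) * (rr x ^ σ * |u x|) := by ring
      _ ≤ _ := by gcongr
  have huS : ContDiff ℝ 1 u := hu.of_le (by exact_mod_cast le_top)
  have hDc : Continuous (fderiv ℝ u) := huS.continuous_fderiv (by norm_num)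
  have hD2c : Continuous (iteratedFDeriv ℝ 2 u) :=
    hu.continuous_iteratedFDeriv (WithTop.coe_le_coe.2 (le_top : ((2:ℕ∞)) ≤ ⊤))
  have hDs : HasCompactSupport (fderiv ℝ u) := huc.fderiv ℝ
  have hD2s : HasCompactSupport (iteratedFDeriv ℝ 2 u) := huc.iteratedFDeriv 2
  have rc : ∀ p : ℝ, 0 ≤ p → Continuous (fun x => rr x ^ p) := fun p hp =>
    rr_cont.rpow_const (fun x => Or.inr hp)
  have hAi : Integrable (fun x => (rr x ^ ((2 * γ + 2 * σ - 1) / 4) * ‖fderiv ℝ u x‖) ^ 4)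
      (volume.restrict S) := by
    refine (Continuous.integrable_of_hasCompactSupport
      (((rc _ (by linarith)).mul hDc.norm).pow 4)
      (HasCompactSupport.intro hDs.isCompact fun x hx => ?_)).integrableOn
    simp [image_eq_zero_of_notMem_tsupport hx]
  have hBi : Integrable (fun x => (rr x ^ ((2 * γ - 1) / 2) * ‖iteratedFDeriv ℝ 2 u x‖) ^ 2)
      (volume.restrict S) := by
    refine (Continuous.integrable_of_hasCompactSupport
      (((rc _ (by linarith)).mul hD2c.norm).pow 2)
      (HasCompactSupport.intro hD2s.isCompact fun x hx => ?_)).integrableOn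
    simp [image_eq_zero_of_notMem_tsupport hx]
  have hXi : ∀ e : V3, Integrable (fun x => qq x ^ (γ - 1/2 + σ) * (fderiv ℝ u x e)^4)
      (volume.restrict S) := by
    intro e
    refine (Continuous.integrable_of_hasCompactSupport
      ((qq_rpow_contDiff _).continuous.mul ((hDc.clm_apply continuous_const).pow 4))
      (HasCompactSupport.intro hDs.isCompact fun x hx => ?_)).integrableOn
    simp [image_eq_zero_of_notMem_tsupport hx]
  set B := ∫ x in S, (rr x ^ ((2 * γ - 1) / 2) * ‖iteratedFDeriv ℝ 2 u x‖) ^ 2 with hB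
  have hdir : ∀ a b : ℝ, 0 ≤ a → 0 ≤ b → a ≤ 1 → b ≤ 1 → a^2+b^2 ≤ T^2 → (a^2+b^2)*T^2 ≤ 1 →
      ∫ x in S, qq x ^ (γ - 1/2 + σ) * (fderiv ℝ u x ![a,b,1])^4 ≤
        (K * (2^(σ/2:ℝ))^2 * 2^(γ-1/2)) * m^2 * B := by
    intro a b ha hb ha1 hb1 h1 h2
    have hest := dir_est S hS ![a,b,1] (cone_add φ0 a b h1 h2) (cone_dot φ0 a b h2)
      (by simp [dot]; nlinarith) (by simp [dot]; nlinarith) γ σ hγ1 hγ2 hσ u hu huc _ hM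
    refine hest.trans ?_
    have hne : ‖(![a,b,1] : V3)‖ ≤ 1 := by
      rw [pi_norm_le_iff_of_nonneg (by norm_num)]
      intro i
      fin_cases i <;> simp [abs_of_nonneg, *]
    have hN : ∫ x in S, qq x ^ (γ - 1/2) *
        (fderiv ℝ (fun y => fderiv ℝ u y ![a,b,1]) x ![a,b,1])^2 ≤ 2^(γ-1/2) * B := by
      rw [hB, ← integral_const_mul]
      apply integral_mono_of_nonneg
      · filter_upwards with x
        have := Real.rpow_pos_of_pos (qq_pos x) (γ-1/2)
        simp only [Pi.zero_apply]
        positivity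
      · exact hBi.const_mul _
      · filter_upwards [ae_restrict_mem hS] with x hx
        have h3 := qq_le φ0 x hx (γ-1/2) (by linarith)
        have h4 := second_bound u hu ![a,b,1] x hne
        have h5 : rr x ^ (2 * (γ-1/2)) = (rr x ^ ((2*γ-1)/2))^2 := by
          rw [← Real.rpow_natCast, ← Real.rpow_mul (rr_nonneg x)]; congr 1; push_cast; ring
        rw [h5] at h3
        rw [← sq_abs (fderiv ℝ (fun y => fderiv ℝ u y ![a,b,1]) x ![a,b,1])]
        calc _ ≤ (2 ^ (γ-1/2) * (rr x ^ ((2*γ-1)/2))^2) * ‖iteratedFDeriv ℝ 2 u x‖^2 := by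
              gcongr
          _ = _ := by ring
    calc _ ≤ K * (2^(σ/2:ℝ) * m)^2 * (2^(γ-1/2) * B) := by gcongr
      _ = _ := by ring
  have g1 := hdir δ 0 hδ.le le_rfl hδ1 zero_le_one (by simpa using hδT) (by simpa using hδT2)
  have g2 := hdir 0 δ le_rfl hδ.le zero_le_one hδ1 (by simpa using hδT) (by simpa using hδT2)
  have g3 := hdir 0 0 le_rfl le_rfl zero_le_one zero_le_one (by simp; positivity) (by simp)
  have hA : ∫ x in S, (rr x ^ ((2 * γ + 2 * σ - 1) / 4) * ‖fderiv ℝ u x‖) ^ 4 ≤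
      ∫ x in S, ((1 + 2/δ)^4 * 27) * ((qq x ^ (γ - 1/2 + σ) * (fderiv ℝ u x ![δ,0,1])^4 +
        qq x ^ (γ - 1/2 + σ) * (fderiv ℝ u x ![0,δ,1])^4) +
        qq x ^ (γ - 1/2 + σ) * (fderiv ℝ u x ![0,0,1])^4) := by
    apply integral_mono hAi ((((hXi _).add (hXi _)).add (hXi _)).const_mul _)
    intro x
    have h1 := fderiv_bound δ hδ (fderiv ℝ u x)
    have h3 := rr_le x (γ - 1/2 + σ) (by linarith)
    have h5 : rr x ^ (2 * (γ-1/2+σ)) = (rr x ^ ((2*γ+2*σ-1)/4))^4 := by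
      rw [← Real.rpow_natCast, ← Real.rpow_mul (rr_nonneg x)]; congr 1; push_cast; ring
    rw [h5] at h3
    have h6 := sum_four |fderiv ℝ u x ![δ,0,1]| |fderiv ℝ u x ![0,δ,1]| |fderiv ℝ u x ![0,0,1]|
    have ev : ∀ y : ℝ, |y|^4 = y^4 := fun y => Even.pow_abs (by decide) y
    rw [ev, ev, ev] at h6
    have hq := (Real.rpow_pos_of_pos (qq_pos x) (γ-1/2+σ)).le
    simp only [Pi.add_apply]
    calc (rr x ^ ((2 * γ + 2 * σ - 1) / 4) * ‖fderiv ℝ u x‖) ^ 4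
        = (rr x ^ ((2 * γ + 2 * σ - 1) / 4))^4 * ‖fderiv ℝ u x‖ ^ 4 := mul_pow _ _ _
      _ ≤ qq x ^ (γ - 1/2 + σ) * ((1 + 2/δ) * (|fderiv ℝ u x ![δ,0,1]| +
          |fderiv ℝ u x ![0,δ,1]| + |fderiv ℝ u x ![0,0,1]|))^4 := by gcongr
      _ = qq x ^ (γ - 1/2 + σ) * ((1 + 2/δ)^4 * (|fderiv ℝ u x ![δ,0,1]| +
          |fderiv ℝ u x ![0,δ,1]| + |fderiv ℝ u x ![0,0,1]|)^4) := by rw [mul_pow]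
      _ ≤ qq x ^ (γ - 1/2 + σ) * ((1 + 2/δ)^4 * (27 * ((fderiv ℝ u x ![δ,0,1])^4 +
          (fderiv ℝ u x ![0,δ,1])^4 + (fderiv ℝ u x ![0,0,1])^4))) := by gcongr
      _ = _ := by ring
  have hXX : Integrable (fun x => qq x ^ (γ - 1/2 + σ) * (fderiv ℝ u x ![δ,0,1])^4 +
        qq x ^ (γ - 1/2 + σ) * (fderiv ℝ u x ![0,δ,1])^4) (volume.restrict S) :=
    (hXi _).add (hXi _)
  rw [integral_const_mul, integral_add hXX (hXi _), integral_add (hXi _) (hXi _)] at hA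
  refine hA.trans ?_
  have hpos : 0 ≤ (1 + 2/δ)^4 * 27 := by positivity
  have hsum := mul_le_mul_of_nonneg_left (add_le_add (add_le_add g1 g2) g3) hpos
  refine hsum.trans (le_of_eq ?_)
  ring

theorem weighted_interpolation_on_cone (γ σ φ0 : ℝ)
    (hγ1 : 1 < γ) (hγ2 : γ < 2) (hσ : 0 < σ)
    (hφ0 : 0 < φ0) (hφ0' : φ0 < Real.pi / 2) :
    ∃ C : ℝ, 0 < C ∧
      ∀ u : (Fin 3 → ℝ) → ℝ, ContDiff ℝ (⊤ : ℕ∞) u → HasCompactSupport u →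
        eLpNorm (fun x => rr x ^ ((2 * γ + 2 * σ - 1) / 4) * ‖fderiv ℝ u x‖) 4
            (volume.restrict (cone φ0)) ≤
          ENNReal.ofReal C *
            (eLpNorm (fun x => rr x ^ ((2 * γ - 1) / 2) * ‖iteratedFDeriv ℝ 2 u x‖) 2
                (volume.restrict (cone φ0))) ^ (1 / 2 : ℝ) *
            (eLpNorm (fun x => rr x ^ σ * u x) ⊤
                (volume.restrict (cone φ0))) ^ (1 / 2 : ℝ) := by
  obtain ⟨C, hC, hmain⟩ := real_est γ σ φ0 hγ1 hγ2 hσ hφ0 hφ0'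
  refine ⟨C ^ (1/4:ℝ), by positivity, ?_⟩
  intro u hu huc
  have huS : ContDiff ℝ 1 u := hu.of_le (by exact_mod_cast le_top)
  have hDc : Continuous (fderiv ℝ u) := huS.continuous_fderiv (by norm_num)
  have hD2c : Continuous (iteratedFDeriv ℝ 2 u) :=
    hu.continuous_iteratedFDeriv (WithTop.coe_le_coe.2 (le_top : ((2:ℕ∞)) ≤ ⊤))
  have hDs : HasCompactSupport (fderiv ℝ u) := huc.fderiv ℝ
  have hD2s : HasCompactSupport (iteratedFDeriv ℝ 2 u) := huc.iteratedFDeriv 2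
  have rc : ∀ p : ℝ, 0 ≤ p → Continuous (fun x => rr x ^ p) := fun p hp =>
    rr_cont.rpow_const (fun x => Or.inr hp)
  have hA : MemLp (fun x => rr x ^ ((2 * γ + 2 * σ - 1) / 4) * ‖fderiv ℝ u x‖) 4
      (volume.restrict (cone φ0)) := by
    apply Continuous.memLp_of_hasCompactSupport ((rc _ (by linarith)).mul hDc.norm)
    refine HasCompactSupport.intro hDs.isCompact fun x hx => ?_
    simp [image_eq_zero_of_notMem_tsupport hx]
  have hB : MemLp (fun x => rr x ^ ((2 * γ - 1) / 2) * ‖iteratedFDeriv ℝ 2 u x‖) 2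
      (volume.restrict (cone φ0)) := by
    apply Continuous.memLp_of_hasCompactSupport ((rc _ (by linarith)).mul hD2c.norm)
    refine HasCompactSupport.intro hD2s.isCompact fun x hx => ?_
    simp [image_eq_zero_of_notMem_tsupport hx]
  have hU : MemLp (fun x => rr x ^ σ * u x) ⊤ (volume.restrict (cone φ0)) := by
    apply Continuous.memLp_of_hasCompactSupport ((rc _ hσ.le).mul huS.continuous)
    refine HasCompactSupport.intro huc.isCompact fun x hx => ?_
    simp [image_eq_zero_of_notMem_tsupport hx]
  set U := eLpNorm (fun x => rr x ^ σ * u x) ⊤ (volume.restrict (cone φ0)) with hUdef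
  have hUtop : U ≠ ⊤ := hU.eLpNorm_ne_top
  have hm : ∀ᵐ x ∂(volume.restrict (cone φ0)), |rr x ^ σ * u x| ≤ U.toReal := by
    have h1 := ae_le_eLpNormEssSup (f := fun x => rr x ^ σ * u x) (μ := volume.restrict (cone φ0))
    rw [← eLpNorm_exponent_top, ← hUdef] at h1
    filter_upwards [h1] with x hx
    have := ENNReal.toReal_mono hUtop hx
    simpa only [toReal_enorm, Real.norm_eq_abs] using this
  have hfin := hmain u hu huc _ hm
  rw [eLp_four _ _ hA, eLp_two _ _ hB, ← ENNReal.ofReal_toReal hUtop]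
  set m := U.toReal
  have hm0 : 0 ≤ m := ENNReal.toReal_nonneg
  set A := ∫ x in cone φ0, (rr x ^ ((2 * γ + 2 * σ - 1) / 4) * ‖fderiv ℝ u x‖) ^ 4 with hAdef
  set B := ∫ x in cone φ0, (rr x ^ ((2 * γ - 1) / 2) * ‖iteratedFDeriv ℝ 2 u x‖) ^ 2 with hBdef
  have hA0 : 0 ≤ A := integral_nonneg fun x => by positivity
  have hB0 : 0 ≤ B := integral_nonneg fun x => by positivity
  rw [ENNReal.ofReal_rpow_of_nonneg (by positivity) (by norm_num),
    ENNReal.ofReal_rpow_of_nonneg hm0 (by norm_num), ← ENNReal.ofReal_mul (by positivity),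
    ← ENNReal.ofReal_mul (by positivity)]
  apply ENNReal.ofReal_le_ofReal
  calc A ^ (1/4:ℝ) ≤ (C * m^2 * B) ^ (1/4:ℝ) := Real.rpow_le_rpow hA0 hfin (by norm_num)
    _ = C^(1/4:ℝ) * (m^2)^(1/4:ℝ) * B^(1/4:ℝ) := by
      rw [Real.mul_rpow (by positivity) hB0, Real.mul_rpow hC.le (by positivity)]
    _ = _ := by
      rw [← Real.rpow_mul hB0, ← Real.rpow_natCast m 2, ← Real.rpow_mul hm0]
      norm_num
      ring
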